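/- arXiv:math/0703385 — 7 statements merged into one kernel-verified Lean document; each statement's English description precedes it below -/
import Mathlib

section
/- Let λ ∈ (0,1) and t₀ ∈ ℝ. If the limit of the partial products lim_{N→∞} ∏_{n=0}^{N} cos(λⁿ t₀) exists and equals 0, then cos(λⁿ t₀) = 0 for some n ∈ ℕ₀; i.e., if the infinite product ∏_{n=0}^{∞} cos(λⁿ t₀) is zero then one of its factors must be zero. -/
/-!
Since `0 ≤ 1 - cos x ≤ x² / 2`, a product of cosines converges absolutely as soon as its angles are
square-summable, and an absolutely convergent product vanishes only if one of its factors does. The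
angles `λⁿ t₀` are square-summable because their squares form a geometric series of ratio `λ²`.
-/

open Filter

theorem exists_eq_zero_of_tendsto_prod_range_zero {R : Type*} [NormedCommRing R] [NormOneClass R]
    [NormMulClass R] [CompleteSpace R] {f : ℕ → R} (hf : Summable fun n => ‖f n - 1‖)
    (h : Tendsto (fun N => ∏ n ∈ Finset.range N, f n) atTop (nhds 0)) :
    ∃ n, f n = 0 := by
  by_contra! hne
  have hprod : ∏' n, (1 + (f n - 1)) ≠ 0 :=
    tprod_one_add_ne_zero_of_summable (by simpa only [add_sub_cancel] using hne) hf
  have hlim := (multipliable_one_add_of_summable hf).hasProd.tendsto_prod_nat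
  simp only [add_sub_cancel] at hprod hlim
  exact hprod (tendsto_nhds_unique hlim h)

theorem abs_cos_sub_one_le_sq_div_two (x : ℝ) : |Real.cos x - 1| ≤ x ^ 2 / 2 := by
  rw [abs_sub_comm, abs_of_nonneg (sub_nonneg.2 (Real.cos_le_one x))]
  linarith [Real.one_sub_sq_div_two_le_cos (x := x)]

theorem summable_norm_cos_sub_one {ι : Type*} {x : ι → ℝ} (hx : Summable fun i => x i ^ 2) :
    Summable fun i => ‖Real.cos (x i) - 1‖ :=
  (hx.div_const 2).of_nonneg_of_le (fun _ => norm_nonneg _)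
    fun i => abs_cos_sub_one_le_sq_div_two (x i)

theorem summable_pow_mul_sq {R : Type*} [NormedCommRing R] [HasSummableGeomSeries R] {r : R}
    (hr : ‖r‖ < 1) (t : R) : Summable fun n : ℕ => (r ^ n * t) ^ 2 := by
  have hr_sq : ‖r ^ 2‖ < 1 :=
    (norm_pow_le' r two_pos).trans_lt (pow_lt_one₀ (norm_nonneg r) hr two_ne_zero)
  simpa only [mul_pow, pow_right_comm] using
    (summable_geometric_of_norm_lt_one hr_sq).mul_right (t ^ 2)

theorem infinite_product_zero_iff_factor_zero_general {x : ℕ → ℝ}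
    (hx : Summable fun n => x n ^ 2)
    (h : Tendsto (fun N : ℕ => ∏ n ∈ Finset.range (N + 1), Real.cos (x n)) atTop (nhds 0)) :
    ∃ n : ℕ, Real.cos (x n) = 0 :=
  exists_eq_zero_of_tendsto_prod_range_zero (summable_norm_cos_sub_one hx)
    ((tendsto_add_atTop_iff_nat 1).1 h)

/-- Let `λ ∈ (0,1)` and `t₀ ∈ ℝ`.  If the limit of the partial products
`∏_{n=0}^{N} cos(λⁿ t₀)` exists and equals `0`, then `cos(λⁿ t₀) = 0` for some `n`. -/
theorem infinite_product_zero_iff_factor_zero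
    (l : ℝ) (hl : l ∈ Set.Ioo (0 : ℝ) 1) (t₀ : ℝ)
    (h : Tendsto (fun N : ℕ => ∏ n ∈ Finset.range (N + 1), Real.cos (l ^ n * t₀))
      atTop (nhds 0)) :
    ∃ n : ℕ, Real.cos (l ^ n * t₀) = 0 :=
  have hl_norm : ‖l‖ < 1 := by rw [Real.norm_of_nonneg hl.1.le]; exact hl.2
  infinite_product_zero_iff_factor_zero_general (summable_pow_mul_sq hl_norm t₀) h
end

section
/- Let ν be a Borel probability measure on ℝ with no atoms satisfying ν = (1/2)(ν ∘ τ₊⁻¹) + (1/2)(ν ∘ τ₋⁻¹) for τ₊(x) = (3/4)x + 1 and τ₋(x) = (3/4)x − 1. For ℓ, ℓ' ∈ ℝ, the exponential functions e_ℓ and e_{ℓ'} are orthogonal in L²(ν) (i.e., ∫ e^{2πiℓx} · e^{−2πiℓ'x} dν(x) = 0) if and only if ℓ − ℓ' ∈ 𝒪 = {4^{n−1}(2m+1)/3ⁿ : n ∈ ℕ₀, m ∈ ℤ}. -/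
/-!
Let `φ` be the characteristic function of a measure invariant under `x ↦ r • x ± b`. Invariance
becomes the functional equation `φ t = cos ⟪b, t⟫ * φ (r • t)`, and the inner product of `e_ℓ` and
`e_ℓ'` is `φ (2π (ℓ - ℓ'))`. Iterating, `φ t` is the product of `cos (rⁱ ⟪b, t⟫)` over `i < n`,
times `φ (rⁿ • t)`. Since `φ` is continuous at `0` and `φ 0 ≠ 0`, the last factor does not vanish
for large `n`, so `φ t = 0` exactly when one of the cosines vanishes.
-/

open MeasureTheory
open scoped ENNReal

/-- The set `𝒪 = {4^{n−1}(2m+1)/3ⁿ : n ∈ ℕ₀, m ∈ ℤ} = {(1/4)(4/3)ⁿ(2m+1) : n ∈ ℕ₀, m ∈ ℤ}`. -/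
def OsetThreeFourths : Set ℝ :=
  {x : ℝ | ∃ (n : ℕ) (m : ℤ), x = (1 / 4) * (4 / 3 : ℝ) ^ n * (2 * (m : ℝ) + 1)}

section FunctionalEquation

open Filter Topology

variable {X M : Type*} {T : X → X} {f g : X → M}

lemma eq_prod_range_iterate_mul [CommMonoid M] (h : ∀ x, f x = g x * f (T x)) (n : ℕ) (x : X) :
    f x = (∏ i ∈ Finset.range n, g (T^[i] x)) * f (T^[n] x) := by
  induction n with
  | zero => simp
  | succ n ih =>
    rw [Finset.prod_range_succ, mul_assoc, Function.iterate_succ_apply', ← h, ← ih]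

lemma eq_zero_iff_exists_iterate_eq_zero [CommMonoidWithZero M] [NoZeroDivisors M]
    [TopologicalSpace M] [T1Space M] [TopologicalSpace X] (h : ∀ x, f x = g x * f (T x)) {x x₀ : X}
    (hT : Tendsto (fun n ↦ T^[n] x) atTop (𝓝 x₀)) (hf : ContinuousAt f x₀) (hf₀ : f x₀ ≠ 0) :
    f x = 0 ↔ ∃ n, g (T^[n] x) = 0 := by
  have : Nontrivial M := ⟨f x₀, 0, hf₀⟩
  constructor
  · intro hx
    obtain ⟨n, hn⟩ : ∃ n, f (T^[n] x) ≠ 0 := ((hf.tendsto.comp hT).eventually_ne hf₀).exists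
    have hprod : ∏ i ∈ Finset.range n, g (T^[i] x) = 0 := by
      rw [eq_prod_range_iterate_mul h n] at hx
      exact (mul_eq_zero.mp hx).resolve_right hn
    obtain ⟨i, -, hi⟩ := Finset.prod_eq_zero_iff.mp hprod
    exact ⟨i, hi⟩
  · rintro ⟨n, hn⟩
    rw [eq_prod_range_iterate_mul h (n + 1) x, Finset.prod_range_succ, hn, mul_zero, zero_mul]

end FunctionalEquation

lemma cos_two_pi_mul_eq_zero_iff {x : ℝ} :
    Real.cos (2 * Real.pi * x) = 0 ↔ ∃ m : ℤ, x = (2 * m + 1) / 4 := by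
  rw [Real.cos_eq_zero_iff]
  refine exists_congr fun m ↦ ?_
  rw [show (2 * (m : ℝ) + 1) * Real.pi / 2 = 2 * Real.pi * ((2 * m + 1) / 4) by ring,
    mul_right_inj' Real.two_pi_pos.ne']

section InnerProductSpace

open scoped ComplexConjugate RealInnerProductSpace

section SeminormedAddCommGroup

variable {E : Type*} [SeminormedAddCommGroup E] [InnerProductSpace ℝ E] [MeasurableSpace E]

lemma charFun_smul_measure (c : ℝ≥0∞) (μ : Measure E) (t : E) :
    charFun (c • μ) t = c.toReal * charFun μ t := by
  rw [charFun_apply, integral_smul_measure, Complex.real_smul, charFun_apply]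

lemma charFun_add_measure [OpensMeasurableSpace E] (μ ν : Measure E) [IsFiniteMeasure μ]
    [IsFiniteMeasure ν] (t : E) : charFun (μ + ν) t = charFun μ t + charFun ν t := by
  simp only [charFun_eq_integral_innerProbChar]
  exact integral_add_measure (BoundedContinuousFunction.integrable _ _)
    (BoundedContinuousFunction.integrable _ _)

lemma integral_exp_mul_conj_exp_eq_charFun (μ : Measure E) (ℓ ℓ' : E) :
    ∫ x, Complex.exp (2 * Real.pi * Complex.I * ⟪x, ℓ⟫)
        * conj (Complex.exp (2 * Real.pi * Complex.I * ⟪x, ℓ'⟫)) ∂μ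
      = charFun μ ((2 * Real.pi) • (ℓ - ℓ')) := by
  rw [charFun_apply]
  congr with x
  rw [← Complex.exp_conj, ← Complex.exp_add, inner_smul_right, inner_sub_right]
  simp only [map_mul, Complex.conj_ofReal, Complex.conj_I, map_ofNat]
  push_cast
  ring_nf

end SeminormedAddCommGroup

variable {E : Type*} [NormedAddCommGroup E] [InnerProductSpace ℝ E] [MeasurableSpace E]

lemma charFun_map_smul_add_const [BorelSpace E] (μ : Measure E) (r : ℝ) (b t : E) :
    charFun (μ.map fun x ↦ r • x + b) t =
      charFun μ (r • t) * Complex.exp (⟪b, t⟫ * Complex.I) := by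
  rw [← charFun_map_smul, ← charFun_map_add_const, Measure.map_map (by fun_prop) (by fun_prop)]
  rfl

/-- The Hutchinson invariance of `ν` under the two maps `x ↦ r • x ± b`, taken with equal weights.
The measure `ν` is not required to be normalized. -/
def IsBernoulliConvolution (ν : Measure E) (r : ℝ) (b : E) : Prop :=
  ν = (1 / 2 : ℝ≥0∞) • ν.map (fun x ↦ r • x + b) + (1 / 2 : ℝ≥0∞) • ν.map (fun x ↦ r • x - b)

variable [BorelSpace E] {ν : Measure E} [IsFiniteMeasure ν] {r : ℝ} {b : E}

namespace IsBernoulliConvolution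

lemma charFun_eq_cos_mul (h : IsBernoulliConvolution ν r b) (t : E) :
    charFun ν t = Real.cos ⟪b, t⟫ * charFun ν (r • t) := by
  have (μ : Measure E) [IsFiniteMeasure μ] : IsFiniteMeasure ((1 / 2 : ℝ≥0∞) • μ) :=
    μ.smul_finite (by simp)
  calc charFun ν t
    _ = 1 / 2 * (charFun ν (r • t) * Complex.exp (⟪b, t⟫ * Complex.I))
        + 1 / 2 * (charFun ν (r • t) * Complex.exp (⟪-b, t⟫ * Complex.I)) := by
      conv_lhs => rw [h]
      simp only [sub_eq_add_neg, charFun_add_measure, charFun_smul_measure,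
        charFun_map_smul_add_const]
      simp
    _ = Real.cos ⟪b, t⟫ * charFun ν (r • t) := by
      rw [Complex.ofReal_cos, Complex.cos, inner_neg_left, Complex.ofReal_neg]
      ring

lemma charFun_eq_zero_iff [SecondCountableTopology E] [NeZero ν]
    (h : IsBernoulliConvolution ν r b) (hr : |r| < 1) (t : E) :
    charFun ν t = 0 ↔ ∃ n : ℕ, Real.cos (r ^ n * ⟪b, t⟫) = 0 := by
  have hT : Filter.Tendsto (fun n ↦ (r • · : E → E)^[n] t) .atTop (nhds 0) := by
    simpa [smul_iterate] using (tendsto_pow_atTop_nhds_zero_of_abs_lt_one hr).smul_const t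
  have h₀ : charFun ν 0 ≠ 0 := by simpa using measureReal_univ_ne_zero
  rw [eq_zero_iff_exists_iterate_eq_zero h.charFun_eq_cos_mul hT continuous_charFun.continuousAt h₀]
  simp only [smul_iterate, inner_smul_right, Complex.ofReal_eq_zero]

end IsBernoulliConvolution

theorem exponentials_orthogonal_iff_diff_mem_Oset_general
    [SecondCountableTopology E] [NeZero ν] (h : IsBernoulliConvolution ν r b) (hr : |r| < 1)
    (ℓ ℓ' : E) :
    ∫ x, Complex.exp (2 * Real.pi * Complex.I * ⟪x, ℓ⟫)
        * conj (Complex.exp (2 * Real.pi * Complex.I * ⟪x, ℓ'⟫)) ∂ν = 0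
      ↔ ∃ (n : ℕ) (m : ℤ), r ^ n * ⟪b, ℓ - ℓ'⟫ = (2 * m + 1) / 4 := by
  rw [integral_exp_mul_conj_exp_eq_charFun, h.charFun_eq_zero_iff hr]
  simp only [inner_smul_right, mul_left_comm _ (2 * Real.pi), cos_two_pi_mul_eq_zero_iff]

end InnerProductSpace

lemma mem_OsetThreeFourths_iff {t : ℝ} :
    t ∈ OsetThreeFourths ↔ ∃ (n : ℕ) (m : ℤ), (3 / 4 : ℝ) ^ n * t = (2 * m + 1) / 4 := by
  refine exists₂_congr fun n m ↦ ?_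
  rw [← eq_inv_mul_iff_mul_eq₀ (by positivity), ← inv_pow, inv_div, one_div_mul_eq_div,
    div_mul_eq_mul_div, mul_div_assoc]

/-- Let `ν` be an atomless Borel probability measure on `ℝ` satisfying the Hutchinson
invariance for `τ±(x) = (3/4)x ± 1`.  For `ℓ, ℓ' ∈ ℝ`, the exponentials `e_ℓ` and `e_{ℓ'}`
are orthogonal in `L²(ν)` if and only if `ℓ − ℓ' ∈ 𝒪`. -/
theorem exponentials_orthogonal_iff_diff_mem_Oset
    (ν : Measure ℝ) [IsProbabilityMeasure ν]
    (hatom : ∀ x : ℝ, ν {x} = 0)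
    (hinv : ν = (1 / 2 : ℝ≥0∞) • Measure.map (fun x : ℝ => (3 / 4 : ℝ) * x + 1) ν
              + (1 / 2 : ℝ≥0∞) • Measure.map (fun x : ℝ => (3 / 4 : ℝ) * x - 1) ν)
    (ℓ ℓ' : ℝ) :
    (∫ x : ℝ, Complex.exp (2 * Real.pi * Complex.I * ℓ * x)
        * (starRingEnd ℂ) (Complex.exp (2 * Real.pi * Complex.I * ℓ' * x)) ∂ν) = 0
      ↔ ℓ - ℓ' ∈ OsetThreeFourths := by
  have hν : IsBernoulliConvolution ν (3 / 4) 1 := hinv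
  simpa [mem_OsetThreeFourths_iff, mul_assoc] using
    exponentials_orthogonal_iff_diff_mem_Oset_general hν (by norm_num [abs_lt]) ℓ ℓ'
end

section
/- Let Γ₁ = { (1/3) · Σ_{j=0}^{p} a_j 4^j : p ∈ ℕ, each a_j ∈ {0,1} } ∪ {0}. Then for every t ∈ ℝ there exists γ ∈ Γ₁ such that the infinite product ∏_{n=0}^{∞} cos(2π(3/4)ⁿ(t − γ)) is nonzero; consequently the function t ↦ Σ_{γ ∈ Γ₁} [∏_{n=0}^{∞} cos(2π(3/4)ⁿ(t − γ))]² is strictly positive on all of ℝ. -/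
/-!
Let `B s = ∏ cos (2π(3/4)ⁿ s)`, the Fourier transform of a Bernoulli convolution. An infinite
product of cosines of square-summable angles vanishes only if a factor does, so for an integer `z`
one has `B (z / 3) = 0` exactly when `z ≠ 0` and the `2`-adic valuation of `z` is even. The elements
of `Γ₁` are the numbers `g / 3` with `g` in the Moser–de Bruijn sequence.

*Nonvanishing.* If `B` vanishes at `t` and at `t - 1/3`, comparing powers of `2` shows that
`t = z / 3` for an integer `z`. Stripping base-four digits `0` and `1` off `z`, up to the first
digit `2` or `3`, produces a Moser–de Bruijn number `g` such that `z - g` is zero or has odd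
valuation.

*Summability.* Distinct Moser–de Bruijn numbers differ by an integer of even valuation, so the
exponentials with frequencies in `Γ₁` are orthonormal for the kernel `B (x - y)`, which is positive
semidefinite as a limit of Schur products of cosine kernels. Bessel's inequality then bounds
`∑ B (t - γ) ^ 2` by `1`.
-/

open Filter

/-- The set `Γ₁ = {(1/3) Σ_{j=0}^{p} a_j 4^j : p ∈ ℕ, a_j ∈ {0,1}} ∪ {0}`. -/
def GamOne : Set ℝ :=
  {x : ℝ | ∃ p : ℕ, ∃ a : ℕ → ℕ, (∀ j, a j = 0 ∨ a j = 1) ∧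
    x = (1 / 3 : ℝ) * ∑ j ∈ Finset.range (p + 1), (a j : ℝ) * (4 : ℝ) ^ j} ∪ {0}

section PosSemidef

open Matrix

variable {ι κ : Type*}

/-- `Matrix.posSemidef_vecMulVec_self_star` for an index type that need not be finite. -/
theorem posSemidef_vecMulVec_star {R : Type*} [Ring R] [PartialOrder R] [StarRing R]
    [StarOrderedRing R] (a : ι → R) : (vecMulVec a (star a)).PosSemidef := by
  refine ⟨by rw [IsHermitian, conjTranspose_vecMulVec, star_star], fun x ↦ ?_⟩
  have h_square : (x.sum fun i xi ↦ x.sum fun j xj ↦ star xi * vecMulVec a (star a) i j * xj)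
      = star (x.sum fun i xi ↦ star (a i) * xi) * x.sum fun i xi ↦ star (a i) * xi := by
    simp [Finsupp.sum, Finset.sum_mul_sum, vecMulVec_apply, mul_assoc]
  exact h_square ▸ star_mul_self_nonneg _

theorem posSemidef_cos_sub (u : ι → ℝ) :
    (of fun i j ↦ Real.cos (u i - u j)).PosSemidef := by
  convert (posSemidef_vecMulVec_star fun i ↦ Real.cos (u i)).add
    (posSemidef_vecMulVec_star fun i ↦ Real.sin (u i)) using 1
  ext i j
  simp [vecMulVec_apply, Real.cos_sub]

theorem isClosed_setOf_posSemidef {R : Type*} [Ring R] [PartialOrder R] [StarRing R]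
    [TopologicalSpace R] [IsTopologicalRing R] [ContinuousStar R] [OrderClosedTopology R] :
    IsClosed {A : Matrix ι ι R | A.PosSemidef} := by
  have h_inter : {A : Matrix ι ι R | A.PosSemidef} = {A | Aᴴ = A} ∩
      ⋂ x : ι →₀ R, {A | 0 ≤ x.sum fun i xi ↦ x.sum fun j xj ↦ star xi * A i j * xj} := by
    ext A
    simp [PosSemidef, IsHermitian]
  refine h_inter ▸ (isClosed_eq continuous_id.matrix_conjTranspose continuous_id).inter
    (isClosed_iInter fun x ↦ isClosed_le continuous_const ?_)
  unfold Finsupp.sum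
  fun_prop

section RCLike

variable {𝕜 : Type*} [RCLike 𝕜] {A : κ → Matrix ι ι 𝕜}

open scoped ComplexOrder

theorem posSemidef_prod (s : Finset κ) (hA : ∀ k ∈ s, (A k).PosSemidef) :
    (of fun i j ↦ ∏ k ∈ s, A k i j).PosSemidef := by
  classical
  induction s using Finset.induction_on with
  | empty =>
    convert posSemidef_vecMulVec_star (1 : ι → 𝕜) using 1
    ext i j
    simp [vecMulVec_apply]
  | insert k s hk ih =>
    simp only [Finset.prod_insert hk]
    exact (hA k (s.mem_insert_self k)).hadamard
      (ih fun l hl ↦ hA l (Finset.mem_insert_of_mem hl))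

theorem posSemidef_tprod (hA : ∀ k, (A k).PosSemidef)
    (hmul : ∀ i j, Multipliable fun k ↦ A k i j) :
    (of fun i j ↦ ∏' k, A k i j).PosSemidef := by
  have h_lim : Tendsto (fun s : Finset κ ↦ (of fun i j ↦ ∏ k ∈ s, A k i j : Matrix ι ι 𝕜)) atTop
      (nhds (of fun i j ↦ ∏' k, A k i j)) :=
    tendsto_pi_nhds.2 fun i ↦ tendsto_pi_nhds.2 fun j ↦ (hmul i j).hasProd
  exact isClosed_setOf_posSemidef.mem_of_tendsto h_lim
    (.of_forall fun s ↦ posSemidef_prod s fun k _ ↦ hA k)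

end RCLike

/-- The Schur complement of the identity block is the gap in Bessel's inequality. -/
theorem sum_star_mul_self_le_of_submatrix_eq_one {R : Type*} [CommRing R] [PartialOrder R]
    [StarRing R] [StarOrderedRing R] [NoZeroDivisors R] [Fintype κ] [DecidableEq κ]
    {K : Matrix ι ι R} (hK : K.PosSemidef) {e : κ → ι} (he : K.submatrix e e = 1) (t : ι) :
    ∑ k, star (K (e k) t) * K (e k) t ≤ K t t := by
  set B : Matrix κ Unit R := of fun k _ ↦ K (e k) t
  set D : Matrix Unit Unit R := of fun _ _ ↦ K t t
  have h_blocks : K.submatrix (Sum.elim e fun _ : Unit ↦ t) (Sum.elim e fun _ ↦ t)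
      = fromBlocks 1 B Bᴴ D := by
    rw [← he]
    ext (k | _) (l | _) <;> simp [B, D, hK.isHermitian.apply]
  let _ : Invertible (1 : Matrix κ κ R) := invertibleOne
  have h_schur : (D - Bᴴ * (1 : Matrix κ κ R)⁻¹ * B).PosSemidef :=
    (PosDef.fromBlocks₁₁ B D .one).1 (h_blocks ▸ hK.submatrix _)
  simpa [B, D, mul_apply] using h_schur.diag_nonneg (i := ())

theorem summable_sq_of_submatrix_eq_one [DecidableEq κ] {K : Matrix ι ι ℝ} (hK : K.PosSemidef)
    {e : κ → ι} (he : K.submatrix e e = 1) (t : ι) : Summable fun k ↦ K (e k) t ^ 2 := by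
  refine summable_of_sum_le (c := K t t) (fun k ↦ sq_nonneg _) fun F ↦ ?_
  have he_restrict : K.submatrix (fun k : F ↦ e k) (fun k : F ↦ e k) = 1 := by
    rw [← submatrix_one _ Subtype.val_injective, ← he, submatrix_submatrix]
    rfl
  have h_bessel := sum_star_mul_self_le_of_submatrix_eq_one hK he_restrict t
  simp only [star_trivial, ← sq] at h_bessel
  rwa [Finset.sum_coe_sort F fun k ↦ K (e k) t ^ 2] at h_bessel

end PosSemidef

section CosineProduct

variable {ι : Type*} {θ : ι → ℝ}

theorem summable_norm_cos_sub_one_s11 (hθ : Summable fun i ↦ θ i ^ 2) :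
    Summable fun i ↦ ‖Real.cos (θ i) - 1‖ := by
  refine (hθ.div_const 2).of_nonneg_of_le (fun i ↦ norm_nonneg _) fun i ↦ ?_
  rw [Real.norm_eq_abs, abs_sub_comm, abs_of_nonneg (sub_nonneg.2 (Real.cos_le_one _))]
  linarith [Real.one_sub_sq_div_two_le_cos (x := θ i)]

theorem multipliable_cos (hθ : Summable fun i ↦ θ i ^ 2) :
    Multipliable fun i ↦ Real.cos (θ i) := by
  simpa using multipliable_one_add_of_summable (summable_norm_cos_sub_one_s11 hθ)

theorem tprod_cos_eq_zero_iff (hθ : Summable fun i ↦ θ i ^ 2) :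
    ∏' i, Real.cos (θ i) = 0 ↔ ∃ i, Real.cos (θ i) = 0 := by
  refine ⟨fun h ↦ ?_, tprod_of_exists_eq_zero⟩
  contrapose! h
  simpa using tprod_one_add_ne_zero_of_summable (f := fun i ↦ Real.cos (θ i) - 1)
    (by simpa using h) (summable_norm_cos_sub_one_s11 hθ)

end CosineProduct

section BernoulliTransform

/-- The Fourier transform of the Bernoulli convolution with ratio `r`, the distribution of
`∑ ± rⁿ` with independent uniform signs, at the frequency `s`. The product converges for `|r| < 1`;
elsewhere the value may be junk. -/
noncomputable def bernoulliTransform (r s : ℝ) : ℝ := ∏' n : ℕ, Real.cos (2 * Real.pi * r ^ n * s)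

variable {r : ℝ}

theorem summable_sq_mul_pow_mul (hr : |r| < 1) (c s : ℝ) :
    Summable fun n : ℕ ↦ (c * r ^ n * s) ^ 2 := by
  have hr_sq : |r ^ 2| < 1 := by rwa [abs_sq, sq_lt_one_iff_abs_lt_one]
  refine ((summable_geometric_of_abs_lt_one hr_sq).mul_left ((c * s) ^ 2)).congr fun n ↦ ?_
  ring

theorem tendsto_prod_range_bernoulliTransform (hr : |r| < 1) (s : ℝ) :
    Tendsto (fun N ↦ ∏ n ∈ Finset.range N, Real.cos (2 * Real.pi * r ^ n * s)) atTop
      (nhds (bernoulliTransform r s)) :=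
  (multipliable_cos (summable_sq_mul_pow_mul hr _ s)).hasProd.tendsto_prod_nat

theorem bernoulliTransform_zero (r : ℝ) : bernoulliTransform r 0 = 1 := by
  simp [bernoulliTransform]

theorem bernoulliTransform_neg (r s : ℝ) : bernoulliTransform r (-s) = bernoulliTransform r s := by
  simp [bernoulliTransform]

theorem posSemidef_bernoulliTransform_sub (hr : |r| < 1) :
    (Matrix.of fun x y ↦ bernoulliTransform r (x - y)).PosSemidef := by
  refine posSemidef_tprod
    (A := fun n ↦ Matrix.of fun x y ↦ Real.cos (2 * Real.pi * r ^ n * (x - y)))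
    (fun n ↦ ?_) fun x y ↦ multipliable_cos (summable_sq_mul_pow_mul hr _ _)
  simpa only [mul_sub] using posSemidef_cos_sub fun x ↦ 2 * Real.pi * r ^ n * x

theorem bernoulliTransform_three_fourths_eq_zero_iff (s : ℝ) :
    bernoulliTransform (3 / 4) s = 0 ↔
      ∃ (n : ℕ) (k : ℤ), 4 * 3 ^ n * s = 4 ^ n * (2 * (k : ℝ) + 1) := by
  have hr : |(3 / 4 : ℝ)| < 1 := by norm_num [abs_of_pos]
  rw [bernoulliTransform, tprod_cos_eq_zero_iff (summable_sq_mul_pow_mul hr _ s)]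
  refine exists_congr fun n ↦ Real.cos_eq_zero_iff.trans (exists_congr fun k ↦ ?_)
  rw [div_pow]
  field_simp
  constructor <;> intro h <;> linarith

end BernoulliTransform

section EvenTwoVal

/-- The nonzero integers of even `2`-adic valuation. Zero is excluded by hand because
`padicValInt 2 0 = 0`. -/
def EvenTwoVal (z : ℤ) : Prop := z ≠ 0 ∧ Even (padicValInt 2 z)

variable {w z : ℤ}

theorem evenTwoVal_of_odd (hz : Odd z) : EvenTwoVal z := by
  have hval : padicValInt 2 z = 0 :=
    padicValInt.eq_zero_of_not_dvd fun h ↦ Int.not_even_iff_odd.2 hz (even_iff_two_dvd.2 h)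
  exact ⟨by rintro rfl; simp at hz, by simp [hval]⟩

theorem evenTwoVal_sq (hz : z ≠ 0) : EvenTwoVal (z ^ 2) :=
  ⟨pow_ne_zero 2 hz, by simp [sq, padicValInt.mul hz hz]⟩

theorem EvenTwoVal.mul_iff (hw : EvenTwoVal w) : EvenTwoVal (w * z) ↔ EvenTwoVal z := by
  rcases eq_or_ne z 0 with rfl | hz
  · simp [EvenTwoVal]
  · simp [EvenTwoVal, padicValInt.mul hw.1 hz, Nat.even_add, hw.1, hz, hw.2]

theorem evenTwoVal_four_pow (n : ℕ) : EvenTwoVal (4 ^ n) := by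
  have hsq := evenTwoVal_sq (pow_ne_zero n (two_ne_zero (α := ℤ)))
  rwa [← pow_mul, mul_comm, pow_mul] at hsq

theorem evenTwoVal_four_mul_iff : EvenTwoVal (4 * z) ↔ EvenTwoVal z :=
  (evenTwoVal_four_pow 1).mul_iff

theorem not_evenTwoVal_of_emod_four_eq_two (hz : z % 4 = 2) : ¬ EvenTwoVal z := by
  obtain ⟨k, rfl⟩ : ∃ k, z = (2 * k + 1) * 2 := ⟨z / 4, by omega⟩
  rw [(evenTwoVal_of_odd (odd_two_mul_add_one k)).mul_iff]
  simp [EvenTwoVal, padicValInt]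

theorem EvenTwoVal.exists_eq_four_pow_mul_odd (hz : EvenTwoVal z) :
    ∃ (k : ℕ) (m : ℤ), Odd m ∧ z = 4 ^ k * m := by
  obtain ⟨hz0, k, hk⟩ := hz
  obtain ⟨m, hm⟩ := padicValInt_dvd (p := 2) z
  refine ⟨k, m, ?_, ?_⟩
  · by_contra h_even
    obtain ⟨l, rfl⟩ := even_iff_two_dvd.1 (Int.not_odd_iff_even.1 h_even)
    have hdvd : ((2 : ℕ) : ℤ) ^ (padicValInt 2 z + 1) ∣ z :=
      ⟨l, by rw [pow_succ, mul_assoc]; exact hm⟩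
    have hval := (padicValInt_dvd_iff _ _).1 hdvd
    omega
  · rw [hk] at hm
    rw [hm, ← two_mul, pow_mul]
    norm_num

theorem bernoulliTransform_intCast_div_three_eq_zero_iff :
    bernoulliTransform (3 / 4) (z / 3) = 0 ↔ EvenTwoVal z := by
  have h3 (n : ℕ) : Odd ((3 : ℤ) ^ n) := Odd.pow (by decide)
  rw [bernoulliTransform_three_fourths_eq_zero_iff]
  constructor
  · rintro ⟨n, k, h⟩
    have h_int : 4 * (3 ^ n * z) = 4 ^ n * (3 * (2 * k + 1)) := by
      have : (4 : ℝ) * (3 ^ n * z) = 4 ^ n * (3 * (2 * k + 1)) := by linear_combination 3 * h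
      exact_mod_cast this
    have hodd : Odd (3 * (2 * k + 1)) := ⟨3 * k + 1, by ring⟩
    rw [← (evenTwoVal_of_odd (h3 n)).mul_iff, ← evenTwoVal_four_mul_iff, h_int,
      (evenTwoVal_four_pow n).mul_iff]
    exact evenTwoVal_of_odd hodd
  · intro hz
    obtain ⟨k, m, hm, rfl⟩ := hz.exists_eq_four_pow_mul_odd
    obtain ⟨l, hl⟩ := (h3 k).mul hm
    have hl_real : (3 : ℝ) ^ k * m = 2 * l + 1 := by exact_mod_cast hl
    refine ⟨k + 1, l, ?_⟩
    push_cast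
    linear_combination 4 * 4 ^ k * hl_real

/-- The least of the `2`-adic valuations `2n`, `2m` and `2` of the three terms occurs twice. -/
theorem eq_one_or_eq_one_or_eq_zero_of_four_pow_mul_sub {n m : ℕ} {a b c : ℤ} (ha : Odd a)
    (hb : Odd b) (hc : Odd c) (h : 4 ^ n * a - 4 ^ m * b = 4 * c) :
    n = 1 ∨ m = 1 ∨ n = 0 ∧ m = 0 := by
  obtain ⟨a', rfl⟩ := ha
  obtain ⟨b', rfl⟩ := hb
  obtain ⟨c', rfl⟩ := hc
  match n, m with
  | 1, _ => simp
  | _, 1 => simp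
  | 0, 0 => simp
  | 0, m + 2 =>
    rw [pow_add] at h
    lia
  | n + 2, 0 =>
    rw [pow_add] at h
    lia
  | n + 2, m + 2 =>
    rw [pow_add, pow_add] at h
    lia

theorem exists_eq_intCast_div_three {t : ℝ} (h₀ : bernoulliTransform (3 / 4) t = 0)
    (h₁ : bernoulliTransform (3 / 4) (t - 1 / 3) = 0) : ∃ z : ℤ, t = z / 3 := by
  obtain ⟨n, u, hu⟩ := (bernoulliTransform_three_fourths_eq_zero_iff _).1 h₀
  obtain ⟨m, v, hv⟩ := (bernoulliTransform_three_fourths_eq_zero_iff _).1 h₁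
  have h3 (k : ℕ) : Odd ((3 : ℤ) ^ k) := Odd.pow (by decide)
  have h_int : (4 : ℤ) ^ n * (3 ^ (m + 1) * (2 * u + 1)) - 4 ^ m * (3 ^ (n + 1) * (2 * v + 1))
      = 4 * 3 ^ (n + m) := by
    have : (4 : ℝ) ^ n * (3 ^ (m + 1) * (2 * u + 1)) - 4 ^ m * (3 ^ (n + 1) * (2 * v + 1))
        = 4 * 3 ^ (n + m) := by
      linear_combination 3 ^ (n + 1) * hv - 3 ^ (m + 1) * hu
    exact_mod_cast this
  rcases eq_one_or_eq_one_or_eq_zero_of_four_pow_mul_sub ((h3 _).mul (odd_two_mul_add_one u))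
    ((h3 _).mul (odd_two_mul_add_one v)) (h3 _) h_int with rfl | rfl | ⟨rfl, rfl⟩
  · exact ⟨2 * u + 1, by push_cast; linarith⟩
  · exact ⟨2 * v + 2, by push_cast; linarith⟩
  · omega

end EvenTwoVal

/-- The Moser–de Bruijn sequence: sums of distinct powers of four. -/
def moserDeBruijn : Set ℕ := {g | ∀ d ∈ Nat.digits 4 g, d ≤ 1}

theorem mem_moserDeBruijn_iff {g : ℕ} : g ∈ moserDeBruijn ↔ g % 4 ≤ 1 ∧ g / 4 ∈ moserDeBruijn := by
  rcases g.eq_zero_or_pos with rfl | hg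
  · simp [moserDeBruijn]
  · simp [moserDeBruijn, Nat.digits_def' (by norm_num : 1 < 4) hg]

theorem zero_mem_moserDeBruijn : 0 ∈ moserDeBruijn := by simp [moserDeBruijn]

theorem four_mul_add_mem_moserDeBruijn {g d : ℕ} (hg : g ∈ moserDeBruijn) (hd : d ≤ 1) :
    4 * g + d ∈ moserDeBruijn := by
  rw [mem_moserDeBruijn_iff, show (4 * g + d) % 4 = d by omega, show (4 * g + d) / 4 = g by omega]
  exact ⟨hd, hg⟩

theorem sum_range_succ_mul_pow {R : Type*} [CommSemiring R] (a : ℕ → R) (b : R) (N : ℕ) :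
    ∑ j ∈ Finset.range (N + 1), a j * b ^ j
      = b * ∑ j ∈ Finset.range N, a (j + 1) * b ^ j + a 0 := by
  rw [Finset.sum_range_succ', Finset.mul_sum]
  simp only [pow_succ, pow_zero, mul_one, mul_comm b, mul_assoc]

theorem sum_mul_four_pow_mem_moserDeBruijn {a : ℕ → ℕ} (ha : ∀ j, a j ≤ 1) (N : ℕ) :
    ∑ j ∈ Finset.range N, a j * 4 ^ j ∈ moserDeBruijn := by
  induction N generalizing a with
  | zero => exact zero_mem_moserDeBruijn
  | succ N ih =>
    rw [sum_range_succ_mul_pow]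
    exact four_mul_add_mem_moserDeBruijn (ih fun j ↦ ha _) (ha 0)

theorem exists_sum_mul_four_pow_of_mem_moserDeBruijn {g : ℕ} (hg : g ∈ moserDeBruijn) :
    ∃ (p : ℕ) (a : ℕ → ℕ), (∀ j, a j ≤ 1) ∧ ∑ j ∈ Finset.range (p + 1), a j * 4 ^ j = g := by
  induction g using Nat.strong_induction_on with
  | _ g ih =>
    rcases g.eq_zero_or_pos with rfl | hg_pos
    · exact ⟨0, 0, fun _ ↦ zero_le_one, by simp⟩
    obtain ⟨hg_mod, hg_div⟩ := mem_moserDeBruijn_iff.1 hg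
    obtain ⟨p, a, ha, hsum⟩ := ih (g / 4) (by omega) hg_div
    refine ⟨p + 1, fun j ↦ Nat.casesOn j (g % 4) a, Nat.rec hg_mod fun j _ ↦ ha j, ?_⟩
    rw [sum_range_succ_mul_pow]
    exact hsum.symm ▸ Nat.div_add_mod g 4

theorem gamOne_eq_image_moserDeBruijn : GamOne = (fun g : ℕ ↦ (g : ℝ) / 3) '' moserDeBruijn := by
  ext x
  constructor
  · rintro (⟨p, a, ha, rfl⟩ | rfl)
    · refine ⟨_, sum_mul_four_pow_mem_moserDeBruijn (a := a) (fun j ↦ ?_) (p + 1), ?_⟩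
      · rcases ha j with h | h <;> simp [h]
      · push_cast
        ring
    · exact ⟨0, zero_mem_moserDeBruijn, by simp⟩
  · rintro ⟨g, hg, rfl⟩
    obtain ⟨p, a, ha, rfl⟩ := exists_sum_mul_four_pow_of_mem_moserDeBruijn hg
    refine Or.inl ⟨p, a, fun j ↦ Nat.le_one_iff_eq_zero_or_eq_one.1 (ha j), ?_⟩
    push_cast
    ring

theorem evenTwoVal_sub_of_mem_moserDeBruijn {g h : ℕ} (hg : g ∈ moserDeBruijn)
    (hh : h ∈ moserDeBruijn) (hne : g ≠ h) : EvenTwoVal (g - h) := by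
  induction hs : g + h using Nat.strong_induction_on generalizing g h with
  | _ s ih =>
    obtain ⟨hg_mod, hg_div⟩ := mem_moserDeBruijn_iff.1 hg
    obtain ⟨hh_mod, hh_div⟩ := mem_moserDeBruijn_iff.1 hh
    by_cases hmod : g % 4 = h % 4
    · rw [show (g - h : ℤ) = 4 * ((g / 4 : ℕ) - (h / 4 : ℕ)) by omega, evenTwoVal_four_mul_iff]
      exact ih _ (by omega) hg_div hh_div (by omega) rfl
    · exact evenTwoVal_of_odd (Int.odd_iff.2 (by omega))

theorem exists_mem_moserDeBruijn_not_evenTwoVal_sub (z : ℤ) :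
    ∃ g ∈ moserDeBruijn, ¬ EvenTwoVal (z - g) := by
  induction hs : z.natAbs using Nat.strong_induction_on generalizing z with
  | _ s ih =>
    have one_mem : 1 ∈ moserDeBruijn := four_mul_add_mem_moserDeBruijn zero_mem_moserDeBruijn le_rfl
    rcases eq_or_ne z 0 with rfl | hz
    · exact ⟨0, zero_mem_moserDeBruijn, by simp [EvenTwoVal]⟩
    by_cases h_two : z % 4 = 2
    · exact ⟨0, zero_mem_moserDeBruijn, not_evenTwoVal_of_emod_four_eq_two (by omega)⟩
    by_cases h_three : z % 4 = 3
    · exact ⟨1, one_mem, not_evenTwoVal_of_emod_four_eq_two (by omega)⟩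
    obtain ⟨g, hg, hval⟩ := ih _ (by omega) (z / 4) rfl
    obtain ⟨d, hd⟩ := Int.eq_ofNat_of_zero_le (Int.emod_nonneg z four_ne_zero)
    refine ⟨4 * g + d, four_mul_add_mem_moserDeBruijn hg (by omega), ?_⟩
    rwa [show z - (4 * g + d : ℕ) = 4 * (z / 4 - g) by omega, evenTwoVal_four_mul_iff]

theorem exists_mem_gamOne_bernoulliTransform_sub_ne_zero (t : ℝ) :
    ∃ γ ∈ GamOne, bernoulliTransform (3 / 4) (t - γ) ≠ 0 := by
  simp only [gamOne_eq_image_moserDeBruijn, Set.exists_mem_image]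
  by_contra! h
  have h₀ := h 0 zero_mem_moserDeBruijn
  have h₁ := h 1 (four_mul_add_mem_moserDeBruijn zero_mem_moserDeBruijn le_rfl)
  obtain ⟨z, rfl⟩ := exists_eq_intCast_div_three (by simpa using h₀) (by simpa using h₁)
  obtain ⟨g, hg, hval⟩ := exists_mem_moserDeBruijn_not_evenTwoVal_sub z
  refine hval (bernoulliTransform_intCast_div_three_eq_zero_iff.1 ?_)
  simpa [sub_div] using h g hg

theorem bernoulliTransform_sub_eq_zero_of_mem_gamOne {x y : ℝ} (hx : x ∈ GamOne) (hy : y ∈ GamOne)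
    (hxy : x ≠ y) : bernoulliTransform (3 / 4) (x - y) = 0 := by
  rw [gamOne_eq_image_moserDeBruijn] at hx hy
  obtain ⟨g, hg, rfl⟩ := hx
  obtain ⟨h, hh, rfl⟩ := hy
  have hval := evenTwoVal_sub_of_mem_moserDeBruijn hg hh fun hgh ↦ hxy (by rw [hgh])
  simpa [sub_div] using bernoulliTransform_intCast_div_three_eq_zero_iff.2 hval

theorem summable_sq_bernoulliTransform_sub_gamOne (t : ℝ) :
    Summable fun γ : GamOne ↦ bernoulliTransform (3 / 4) (t - γ) ^ 2 := by
  classical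
  have hK := posSemidef_bernoulliTransform_sub (r := 3 / 4) (by norm_num [abs_of_pos])
  have h_orthonormal : (Matrix.of fun x y ↦ bernoulliTransform (3 / 4) (x - y)).submatrix
      (fun γ : GamOne ↦ (γ : ℝ)) (fun γ : GamOne ↦ (γ : ℝ)) = 1 := by
    ext x y
    rcases eq_or_ne x y with rfl | hxy
    · simp [bernoulliTransform_zero]
    · simpa [hxy] using
        bernoulliTransform_sub_eq_zero_of_mem_gamOne x.2 y.2 (Subtype.coe_ne_coe.2 hxy)
  refine (summable_sq_of_submatrix_eq_one hK h_orthonormal t).congr fun γ ↦ ?_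
  rw [Matrix.of_apply, ← bernoulliTransform_neg, neg_sub]

/-- Let `S s` denote the value of the infinite product `∏_{n=0}^{∞} cos(2π(3/4)ⁿ s)`
(the limit of its partial products).  Then for every `t ∈ ℝ` there is `γ ∈ Γ₁` with
`S (t − γ) ≠ 0`; consequently `t ↦ Σ_{γ ∈ Γ₁} S(t − γ)²` is strictly positive on `ℝ`. -/
theorem gamOne_sum_strictly_positive
    (S : ℝ → ℝ)
    (hS : ∀ s : ℝ, Tendsto (fun N : ℕ => ∏ n ∈ Finset.range (N + 1),
      Real.cos (2 * Real.pi * (3 / 4 : ℝ) ^ n * s)) atTop (nhds (S s))) :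
    ∀ t : ℝ, (∃ γ ∈ GamOne, S (t - γ) ≠ 0) ∧
      0 < ∑' γ : GamOne, (S (t - (γ : ℝ))) ^ 2 := by
  intro t
  obtain rfl : S = bernoulliTransform (3 / 4) := funext fun s ↦
    tendsto_nhds_unique (hS s) ((tendsto_add_atTop_iff_nat 1).2
      (tendsto_prod_range_bernoulliTransform (by norm_num [abs_of_pos]) s))
  obtain ⟨γ, hγ, hne⟩ := exists_mem_gamOne_bernoulliTransform_sub_ne_zero t
  exact ⟨⟨γ, hγ, hne⟩, (summable_sq_bernoulliTransform_sub_gamOne t).tsum_pos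
    (fun _ ↦ sq_nonneg _) ⟨γ, hγ⟩ (by positivity)⟩
end

section
/- Let a, b be coprime positive integers with a < b and both a and b odd. If γ and γ' are distinct elements of 𝒪_{a,b} = { (1/4)(b/a)ⁿ(2k+1) : n ∈ ℕ₀, k ∈ ℤ }, then γ − γ' ∉ 𝒪_{a,b}. Consequently, any set Γ containing 0 whose nonzero elements lie in 𝒪_{a,b} and whose pairwise differences lie in 𝒪_{a,b} contains at most one nonzero element. -/
/-!
As `a` and `b` are odd, `4 x` is a quotient of two odd integers for every `x ∈ 𝒪_{a,b}`.
Over an odd common denominator, the difference of two such quotients has an even numerator,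
so it is never again such a quotient.
-/

/-- The set `𝒪_{a,b} = {(1/4)(b/a)ⁿ(2k+1) : n ∈ ℕ₀, k ∈ ℤ}`. -/
def OsetAB (a b : ℕ) : Set ℝ :=
  {x : ℝ | ∃ (n : ℕ) (k : ℤ), x = (1 / 4) * ((b : ℝ) / (a : ℝ)) ^ n * (2 * (k : ℝ) + 1)}

/-- A quotient of two odd integers; in characteristic zero, the image in `K` of a rational number
of `2`-adic valuation zero. Only in positive characteristic can `q` vanish in `K`, which makes `x`
zero by the convention for division. -/
def IsOddQuotient {K : Type*} [Field K] (x : K) : Prop :=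
  ∃ p q : ℤ, Odd p ∧ Odd q ∧ x = p / q

namespace IsOddQuotient

variable {K : Type*} [Field K] {x y : K}

theorem intCast {m : ℤ} (hm : Odd m) : IsOddQuotient (m : K) :=
  ⟨m, 1, hm, odd_one, by simp⟩

theorem mul (hx : IsOddQuotient x) (hy : IsOddQuotient y) : IsOddQuotient (x * y) := by
  obtain ⟨p, q, hp, hq, rfl⟩ := hx
  obtain ⟨r, s, hr, hs, rfl⟩ := hy
  exact ⟨p * r, q * s, hp.mul hr, hq.mul hs, by push_cast; exact div_mul_div_comm ..⟩

theorem pow (hx : IsOddQuotient x) (n : ℕ) : IsOddQuotient (x ^ n) := by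
  obtain ⟨p, q, hp, hq, rfl⟩ := hx
  exact ⟨p ^ n, q ^ n, hp.pow, hq.pow, by push_cast; exact div_pow ..⟩

theorem not_sub [CharZero K] (hx : IsOddQuotient x) (hy : IsOddQuotient y) :
    ¬ IsOddQuotient (x - y) := by
  obtain ⟨p, q, hp, hq, rfl⟩ := hx
  obtain ⟨r, s, hr, hs, rfl⟩ := hy
  rintro ⟨t, u, ht, hu, h⟩
  have cast_ne_zero {m : ℤ} (hm : Odd m) : (m : K) ≠ 0 :=
    Int.cast_ne_zero.mpr fun h0 => by simp [h0] at hm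
  have cleared : (p * s - q * r) * u = t * (q * s) := by
    rw [div_sub_div _ _ (cast_ne_zero hq) (cast_ne_zero hs),
      div_eq_div_iff (mul_ne_zero (cast_ne_zero hq) (cast_ne_zero hs)) (cast_ne_zero hu)] at h
    exact_mod_cast h
  have left_even : Even ((p * s - q * r) * u) := ((hp.mul hs).sub_odd (hq.mul hr)).mul_right u
  have right_odd : Odd (t * (q * s)) := ht.mul (hq.mul hs)
  exact Int.not_even_iff_odd.mpr right_odd (cleared ▸ left_even)

end IsOddQuotient

theorem isOddQuotient_four_mul_of_mem_OsetAB {a b : ℕ} (ha : Odd a) (hb : Odd b) {x : ℝ}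
    (hx : x ∈ OsetAB a b) : IsOddQuotient (4 * x) := by
  obtain ⟨n, k, rfl⟩ := hx
  have ratio : IsOddQuotient ((b : ℝ) / a) :=
    ⟨b, a, hb.natCast, ha.natCast, by push_cast; rfl⟩
  have odd_factor : IsOddQuotient (2 * (k : ℝ) + 1) := by
    exact_mod_cast IsOddQuotient.intCast (K := ℝ) (odd_two_mul_add_one k)
  convert (ratio.pow n).mul odd_factor using 1
  ring

theorem subsingleton_of_pairwise_sub_mem {α : Type*} [Sub α] {S T : Set α}
    (hS : ∀ x ∈ S, ∀ y ∈ S, x - y ∉ S) (hT : T ⊆ S) (hsub : T.Pairwise (· - · ∈ S)) :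
    T.Subsingleton := fun x hx y hy =>
  hsub.eq hx hy (hS x (hT hx) y (hT hy))

theorem both_odd_at_most_one_nonzero_general {a b : ℕ} (ha : Odd a) (hb : Odd b) :
    (∀ γ ∈ OsetAB a b, ∀ γ' ∈ OsetAB a b, γ - γ' ∉ OsetAB a b) ∧
    (∀ Γ : Set ℝ, Γ \ {0} ⊆ OsetAB a b → Γ.Pairwise (· - · ∈ OsetAB a b) →
      (Γ \ {0}).Subsingleton) := by
  have sub_notMem : ∀ γ ∈ OsetAB a b, ∀ γ' ∈ OsetAB a b, γ - γ' ∉ OsetAB a b := by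
    intro γ hγ γ' hγ' hsub
    have hdiff := isOddQuotient_four_mul_of_mem_OsetAB ha hb hsub
    rw [mul_sub] at hdiff
    exact (isOddQuotient_four_mul_of_mem_OsetAB ha hb hγ).not_sub
      (isOddQuotient_four_mul_of_mem_OsetAB ha hb hγ') hdiff
  exact ⟨sub_notMem, fun Γ hΓ hsub =>
    subsingleton_of_pairwise_sub_mem sub_notMem hΓ (hsub.mono Set.sdiff_subset)⟩

/-- Let `a, b` be coprime positive integers with `a < b` and both odd.  If `γ ≠ γ'` are
elements of `𝒪_{a,b}`, then `γ − γ' ∉ 𝒪_{a,b}`; consequently any set `Γ` containing `0`,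
with nonzero elements in `𝒪_{a,b}` and pairwise differences of distinct elements in
`𝒪_{a,b}`, contains at most one nonzero element. -/
theorem both_odd_at_most_one_nonzero
    (a b : ℕ) (ha : 0 < a) (hab : a < b) (hco : Nat.Coprime a b)
    (hao : Odd a) (hbo : Odd b) :
    (∀ γ ∈ OsetAB a b, ∀ γ' ∈ OsetAB a b, γ ≠ γ' → γ - γ' ∉ OsetAB a b) ∧
    (∀ Γ : Set ℝ, (0 : ℝ) ∈ Γ →
      (∀ γ ∈ Γ, γ ≠ 0 → γ ∈ OsetAB a b) →
      (∀ γ ∈ Γ, ∀ γ' ∈ Γ, γ ≠ γ' → γ - γ' ∈ OsetAB a b) →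
      ∀ x ∈ Γ, ∀ y ∈ Γ, x ≠ 0 → y ≠ 0 → x = y) := by
  obtain ⟨sub_notMem, subsingleton⟩ := both_odd_at_most_one_nonzero_general hao hbo
  exact ⟨fun γ hγ γ' hγ' _ => sub_notMem γ hγ γ' hγ', fun Γ _ hΓ hsub _ hx _ hy hx0 hy0 =>
    subsingleton Γ (fun γ hγ => hΓ γ hγ.1 hγ.2) hsub ⟨hx, hx0⟩ ⟨hy, hy0⟩⟩
end

section
/- Let a, b be coprime positive integers with a < b, a even and b odd. Let γ = (1/4)(b/a)ⁿ(2k+1) and γ' = (1/4)(b/a)^{n'}(2k'+1) with n, n' ∈ ℕ₀, k, k' ∈ ℤ, and γ ≠ γ'. If γ − γ' ∈ 𝒪_{a,b}, say γ − γ' = (1/4)(b/a)^p(2m+1) with p ∈ ℕ₀ and m ∈ ℤ, then: if n = n' then p < n, and if n ≠ n' then p = max{n, n'}. -/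
section Valuation

variable {R Γ₀ : Type*} [Ring R] [LinearOrderedCommGroupWithZero Γ₀] {v : Valuation R Γ₀}
  {r x y z : R} {n n' p : ℕ}

theorem exponent_lt_of_pow_mul_sub_eq (hr : 1 < v r) (hxy : v (x - y) < 1) (hz : v z = 1)
    (h : r ^ n * x - r ^ n * y = r ^ p * z) : p < n := by
  refine (pow_lt_pow_iff_right₀ hr).mp ?_
  have hrn : 0 < v r ^ n := pow_pos (zero_lt_one.trans hr) n
  calc
    v r ^ p = v (r ^ p * z) := by rw [map_mul, map_pow, hz, mul_one]
    _ = v r ^ n * v (x - y) := by rw [← h, ← mul_sub, map_mul, map_pow]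
    _ < v r ^ n := mul_lt_of_lt_one_right hrn hxy

theorem exponent_eq_max_of_pow_mul_sub_eq (hr : 1 < v r) (hx : v x = 1) (hy : v y = 1)
    (hz : v z = 1) (hn : n ≠ n') (h : r ^ n * x - r ^ n' * y = r ^ p * z) : p = max n n' := by
  have hmono : StrictMono (v r ^ · : ℕ → Γ₀) := pow_right_strictMono₀ hr
  have hvx : v (r ^ n * x) = v r ^ n := by rw [map_mul, map_pow, hx, mul_one]
  have hvy : v (-(r ^ n' * y)) = v r ^ n' := by
    rw [Valuation.map_neg, map_mul, map_pow, hy, mul_one]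
  have hne : v (r ^ n * x) ≠ v (-(r ^ n' * y)) := by
    rw [hvx, hvy]
    exact hmono.injective.ne hn
  apply hmono.injective
  calc
    v r ^ p = v (r ^ n * x + -(r ^ n' * y)) := by
      rw [← sub_eq_add_neg, h, map_mul, map_pow, hz, mul_one]
    _ = max (v r ^ n) (v r ^ n') := by rw [v.map_add_of_distinct_val hne, hvx, hvy]
    _ = v r ^ max n n' := hmono.monotone.map_max.symm

end Valuation

theorem one_lt_padicValuation_div {p : ℕ} [Fact p.Prime] {a b : ℤ} (ha : a ≠ 0)
    (hpa : (p : ℤ) ∣ a) (hpb : ¬ (p : ℤ) ∣ b) : 1 < Rat.padicValuation p (b / a) := by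
  have hva : 0 < Int.padicValuation p a :=
    zero_lt_iff.mpr (Int.padicValuation_eq_zero_iff.not.mpr ha)
  rw [map_div₀, Rat.padicValuation_cast, Rat.padicValuation_cast,
    Int.padicValuation_eq_one_iff.mpr hpb, one_lt_div₀ hva]
  exact Int.padicValuation_lt_one_iff.mpr hpa

theorem padicValuation_two_eq_one_of_odd {x : ℤ} (hx : Odd x) : Rat.padicValuation 2 x = 1 :=
  Int.padicValuation_eq_one_iff.mpr (Int.two_dvd_ne_zero.mpr (Int.odd_iff.mp hx))

theorem padicValuation_two_sub_lt_one_of_odd {x y : ℤ} (hx : Odd x) (hy : Odd y) :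
    Rat.padicValuation 2 (x - y) < 1 := by
  rw [← Int.cast_sub, Rat.padicValuation_cast, Int.padicValuation_lt_one_iff]
  exact (hx.sub_odd hy).two_dvd

theorem diff_in_Oset_exponent_cases_general {K : Type*} [Field K] [CharZero K] {a b : ℤ}
    (ha : a ≠ 0) (hae : Even a) (hbo : Odd b) {n n' p : ℕ} {k k' m : ℤ} {γ γ' : K}
    (hγ : γ = (1 / 4) * ((b : K) / (a : K)) ^ n * (2 * (k : K) + 1))
    (hγ' : γ' = (1 / 4) * ((b : K) / (a : K)) ^ n' * (2 * (k' : K) + 1))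
    (hdiff : γ - γ' = (1 / 4) * ((b : K) / (a : K)) ^ p * (2 * (m : K) + 1)) :
    (n = n' → p < n) ∧ (n ≠ n' → p = max n n') := by
  have hr : 1 < Rat.padicValuation 2 (b / a) :=
    one_lt_padicValuation_div ha hae.two_dvd (Int.two_dvd_ne_zero.mpr (Int.odd_iff.mp hbo))
  have hk := odd_two_mul_add_one k
  have hk' := odd_two_mul_add_one k'
  have hz := padicValuation_two_eq_one_of_odd (odd_two_mul_add_one m)
  have hK : ((b : K) / a) ^ n * (2 * k + 1) - (b / a) ^ n' * (2 * k' + 1)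
      = (b / a) ^ p * (2 * m + 1) := by
    linear_combination 4 * hdiff - 4 * hγ + 4 * hγ'
  have hℚ : (b / a : ℚ) ^ n * (2 * k + 1 : ℤ) - (b / a) ^ n' * (2 * k' + 1 : ℤ)
      = (b / a) ^ p * (2 * m + 1 : ℤ) := by
    exact_mod_cast hK
  refine ⟨?_, fun hn ↦ ?_⟩
  · rintro rfl
    exact exponent_lt_of_pow_mul_sub_eq hr (padicValuation_two_sub_lt_one_of_odd hk hk') hz hℚ
  · exact exponent_eq_max_of_pow_mul_sub_eq hr (padicValuation_two_eq_one_of_odd hk)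
      (padicValuation_two_eq_one_of_odd hk') hz hn hℚ

/-- Let `a, b` be coprime positive integers with `a < b`, `a` even and `b` odd, and let
`γ = (1/4)(b/a)ⁿ(2k+1)`, `γ' = (1/4)(b/a)^{n'}(2k'+1)` be distinct.  If
`γ − γ' = (1/4)(b/a)^p(2m+1) ∈ 𝒪_{a,b}`, then: if `n = n'` then `p < n`, and if
`n ≠ n'` then `p = max{n, n'}`. -/
theorem diff_in_Oset_exponent_cases
    (a b : ℕ) (ha : 0 < a) (hab : a < b) (hco : Nat.Coprime a b)
    (hae : Even a) (hbo : Odd b)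
    (n n' p : ℕ) (k k' m : ℤ)
    (γ γ' : ℝ)
    (hγ : γ = (1 / 4) * ((b : ℝ) / (a : ℝ)) ^ n * (2 * (k : ℝ) + 1))
    (hγ' : γ' = (1 / 4) * ((b : ℝ) / (a : ℝ)) ^ n' * (2 * (k' : ℝ) + 1))
    (hne : γ ≠ γ')
    (hdiff : γ - γ' = (1 / 4) * ((b : ℝ) / (a : ℝ)) ^ p * (2 * (m : ℝ) + 1)) :
    (n = n' → p < n) ∧ (n ≠ n' → p = max n n') := by
  rw [← Int.cast_natCast a, ← Int.cast_natCast b] at hγ hγ' hdiff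
  exact diff_in_Oset_exponent_cases_general (mod_cast ha.ne') (mod_cast hae) (mod_cast hbo)
    hγ hγ' hdiff
end

section
/- Let a, b be coprime positive integers with a < b, a even and b odd, and let n ∈ ℕ₀. If k, k' ∈ ℤ are distinct and k ≡ k' (mod a^{n+1}), then the difference (1/4)(b/a)ⁿ(2k+1) − (1/4)(b/a)ⁿ(2k'+1) does not belong to 𝒪_{a,b}. Consequently, in any set Γ of reals whose pairwise differences lie in 𝒪_{a,b}, at most one element of the form (1/4)(b/a)ⁿ(2k+1) can occur for each congruence class of k modulo a^{n+1}. -/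
/-- The element `(1/4)(b/a)ⁿ(2k+1)` of `𝒪_{a,b}`, named so that the elements with a fixed exponent
`n` can be compared as `k` varies. -/
noncomputable def frequency (a b n : ℕ) (k : ℤ) : ℝ :=
  (1 / 4) * ((b : ℝ) / (a : ℝ)) ^ n * (2 * (k : ℝ) + 1)

section

variable {a b n : ℕ}

theorem frequency_injective (ha : a ≠ 0) (hb : b ≠ 0) : Function.Injective (frequency a b n) := by
  intro k k' h
  have hscale : (1 / 4 : ℝ) * ((b : ℝ) / a) ^ n ≠ 0 := by positivity
  have hodd : 2 * (k : ℝ) + 1 = 2 * (k' : ℝ) + 1 := mul_left_cancel₀ hscale h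
  exact_mod_cast mul_left_cancel₀ two_ne_zero (add_right_cancel hodd)

theorem frequency_sub_frequency (k k' : ℤ) :
    frequency a b n k - frequency a b n k' = ((b : ℝ) / a) ^ n * ((k : ℝ) - k') / 2 := by
  unfold frequency
  ring

theorem exists_frequency_sub_frequency_eq_div_two (ha : a ≠ 0) {k k' : ℤ}
    (h : k ≡ k' [ZMOD (a : ℤ) ^ n]) :
    ∃ N : ℤ, frequency a b n k - frequency a b n k' = (N : ℝ) / 2 := by
  obtain ⟨t, ht⟩ := h.symm.dvd
  have htR : (k : ℝ) - k' = (a : ℝ) ^ n * t := by exact_mod_cast ht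
  refine ⟨(b : ℤ) ^ n * t, ?_⟩
  rw [frequency_sub_frequency, htR, div_pow]
  push_cast
  field_simp

theorem exists_odd_four_mul_pow_mul_frequency_eq (ha : a ≠ 0) (hb : Odd b) (k : ℤ) :
    ∃ z : ℤ, Odd z ∧ 4 * (a : ℝ) ^ n * frequency a b n k = z := by
  have hbZ : Odd (b : ℤ) := by exact_mod_cast hb
  refine ⟨(b : ℤ) ^ n * (2 * k + 1), hbZ.pow.mul (odd_two_mul_add_one k), ?_⟩
  rw [frequency, div_pow]
  push_cast
  field_simp

theorem intCast_div_two_notMem_OsetAB (ha : a ≠ 0) (hb : Odd b) (N : ℤ) :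
    (N : ℝ) / 2 ∉ OsetAB a b := by
  rintro ⟨m, j, h⟩
  change (N : ℝ) / 2 = frequency a b m j at h
  obtain ⟨z, hz, hmul⟩ := exists_odd_four_mul_pow_mul_frequency_eq (n := m) ha hb j
  have hzR : (z : ℝ) = 2 * ((a : ℝ) ^ m * N) := by
    rw [← hmul, ← h]
    ring
  have hzZ : z = 2 * ((a : ℤ) ^ m * N) := by exact_mod_cast hzR
  exact Int.not_even_iff_odd.mpr hz (hzZ ▸ even_two_mul _)

theorem frequency_sub_frequency_notMem_OsetAB (ha : a ≠ 0) (hb : Odd b) {k k' : ℤ}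
    (h : k ≡ k' [ZMOD (a : ℤ) ^ n]) :
    frequency a b n k - frequency a b n k' ∉ OsetAB a b := by
  obtain ⟨N, hN⟩ := exists_frequency_sub_frequency_eq_div_two (b := b) ha h
  exact hN ▸ intCast_div_two_notMem_OsetAB ha hb N

theorem congruent_frequencies_not_orthogonal_general (ha : a ≠ 0) (hb : Odd b) {k k' : ℤ}
    (h : k ≡ k' [ZMOD (a : ℤ) ^ n]) :
    frequency a b n k - frequency a b n k' ∉ OsetAB a b ∧
      ∀ Γ : Set ℝ, Γ.Pairwise (fun γ γ' => γ - γ' ∈ OsetAB a b) →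
        frequency a b n k ∈ Γ → frequency a b n k' ∈ Γ → k = k' := by
  have hsub := frequency_sub_frequency_notMem_OsetAB ha hb h
  refine ⟨hsub, fun Γ hΓ hk hk' => ?_⟩
  by_contra hne
  exact hsub (hΓ hk hk' ((frequency_injective ha hb.pos.ne').ne hne))

end

/-- Let `a, b` be coprime positive integers with `a < b`, `a` even, `b` odd, and `n ∈ ℕ₀`.
If `k ≠ k'` are integers congruent mod `a^{n+1}`, then
`(1/4)(b/a)ⁿ(2k+1) − (1/4)(b/a)ⁿ(2k'+1) ∉ 𝒪_{a,b}`.  Consequently, in any set `Γ` of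
reals whose pairwise differences of distinct elements lie in `𝒪_{a,b}`, at most one
element of the form `(1/4)(b/a)ⁿ(2k+1)` occurs per congruence class of `k` mod `a^{n+1}`. -/
theorem congruent_frequencies_not_orthogonal
    (a b : ℕ) (ha : 0 < a) (hab : a < b) (hco : Nat.Coprime a b)
    (hae : Even a) (hbo : Odd b) (n : ℕ) :
    (∀ k k' : ℤ, k ≠ k' → k ≡ k' [ZMOD ((a : ℤ) ^ (n + 1))] →
      (1 / 4) * ((b : ℝ) / (a : ℝ)) ^ n * (2 * (k : ℝ) + 1)
        - (1 / 4) * ((b : ℝ) / (a : ℝ)) ^ n * (2 * (k' : ℝ) + 1) ∉ OsetAB a b) ∧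
    (∀ Γ : Set ℝ, (∀ γ ∈ Γ, ∀ γ' ∈ Γ, γ ≠ γ' → γ - γ' ∈ OsetAB a b) →
      ∀ k k' : ℤ, k ≡ k' [ZMOD ((a : ℤ) ^ (n + 1))] →
        (1 / 4) * ((b : ℝ) / (a : ℝ)) ^ n * (2 * (k : ℝ) + 1) ∈ Γ →
        (1 / 4) * ((b : ℝ) / (a : ℝ)) ^ n * (2 * (k' : ℝ) + 1) ∈ Γ →
        k = k') := by
  have general (k k' : ℤ) (h : k ≡ k' [ZMOD (a : ℤ) ^ (n + 1)]) :=
    congruent_frequencies_not_orthogonal_general ha.ne' hbo (h.of_dvd (pow_dvd_pow _ n.le_succ))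
  exact ⟨fun k k' _ h => (general k k' h).1, fun Γ hΓ k k' h =>
    (general k k' h).2 Γ fun γ hγ γ' hγ' => hΓ γ hγ γ' hγ'⟩
end

section
/- Let ν be a Borel probability measure on ℝ with compact support, and let Γ ⊆ ℝ be such that the exponentials {e_γ : γ ∈ Γ} form an orthonormal family in L²(ν). Then {e_γ : γ ∈ Γ} is an orthonormal basis of L²(ν) if and only if for every t ∈ ℝ one has Σ_{γ ∈ Γ} |ν̂(t − γ)|² = 1, where ν̂(s) = ∫_ℝ e^{2πi x s} dν(x). -/
/-!
For an orthonormal family `v` in a Hilbert space, `∑ i, |⟨v i, x⟩|²` is the squared norm of the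
orthogonal projection of `x` to the closed span of `v`, so it equals `‖x‖²` exactly when `x` lies in
that closed span. Since `⟨e_γ, e_t⟩ = ν̂(t - γ)` and `‖e_t‖ = 1`, the sum condition says that the
closed span of `{e_γ : γ ∈ Γ}` contains every exponential `e_t`.

All exponentials together are total in `L²(ν)`: a function orthogonal to all of them is integrable
with vanishing Fourier transform against `ν`, and so are its real and imaginary parts. For a real
function `g` this says that the finite measures `g⁺ ν` and `g⁻ ν` have the same characteristic
function, hence coincide, and `g = 0` almost everywhere.
-/

open MeasureTheory
open scoped ENNReal

open scoped BoundedContinuousFunction ComplexConjugate FourierTransform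

section ClosedSpan

variable {𝕜 ι H : Type*} [RCLike 𝕜] [NormedAddCommGroup H] [InnerProductSpace 𝕜 H]

lemma tsum_norm_inner_sq_of_hilbertBasis (b : HilbertBasis ι 𝕜 H) (x : H) :
    ∑' i, ‖inner 𝕜 (b i) x‖ ^ 2 = ‖x‖ ^ 2 := by
  have h := lp.norm_rpow_eq_tsum (p := 2) (by norm_num) (b.repr x)
  simpa [b.repr_apply_apply] using h.symm

variable [CompleteSpace H] {v : ι → H}

lemma exists_hilbertBasis_topologicalClosure_span (hv : Orthonormal 𝕜 v) :
    ∃ b : HilbertBasis ι 𝕜 (Submodule.span 𝕜 (Set.range v)).topologicalClosure,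
      ∀ i, (b i : H) = v i := by
  set S := Submodule.span 𝕜 (Set.range v)
  have hmem (i : ι) : v i ∈ S.topologicalClosure :=
    S.le_topologicalClosure (Submodule.subset_span (Set.mem_range_self i))
  let w (i : ι) : S.topologicalClosure := ⟨v i, hmem i⟩
  have hw : Orthonormal 𝕜 w := hv.codRestrict _ hmem
  have hbot : (Submodule.span 𝕜 (Set.range w))ᗮ = ⊥ := by
    refine (Submodule.eq_bot_iff _).2 fun y hy ↦ ?_
    have hvy : Set.range v ⊆ (𝕜 ∙ (y : H))ᗮ := by
      rintro _ ⟨i, rfl⟩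
      exact Submodule.mem_orthogonal_singleton_iff_inner_left.2
        (hy (w i) (Submodule.subset_span (Set.mem_range_self i)))
    have hS : S.topologicalClosure ≤ (𝕜 ∙ (y : H))ᗮ :=
      S.topologicalClosure_minimal (Submodule.span_le.2 hvy) (Submodule.isClosed_orthogonal _)
    have hyy : inner 𝕜 (y : H) y = 0 :=
      Submodule.mem_orthogonal_singleton_iff_inner_left.1 (hS y.2)
    exact Subtype.ext (inner_self_eq_zero.1 hyy)
  exact ⟨.mkOfOrthogonalEqBot hw hbot, fun i ↦ by simp [w]⟩

lemma tsum_norm_inner_sq_eq_norm_starProjection_sq (hv : Orthonormal 𝕜 v) (x : H) :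
    ∑' i, ‖inner 𝕜 (v i) x‖ ^ 2 =
      ‖(Submodule.span 𝕜 (Set.range v)).topologicalClosure.starProjection x‖ ^ 2 := by
  obtain ⟨b, hb⟩ := exists_hilbertBasis_topologicalClosure_span hv
  rw [Submodule.starProjection_apply, ← Submodule.coe_norm, ← tsum_norm_inner_sq_of_hilbertBasis b]
  simp [hb]

lemma mem_topologicalClosure_span_iff_tsum_norm_inner_sq (hv : Orthonormal 𝕜 v) (x : H) :
    x ∈ (Submodule.span 𝕜 (Set.range v)).topologicalClosure ↔
      ∑' i, ‖inner 𝕜 (v i) x‖ ^ 2 = ‖x‖ ^ 2 := by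
  rw [Submodule.mem_iff_norm_starProjection, tsum_norm_inner_sq_eq_norm_starProjection_sq hv,
    sq_eq_sq₀ (norm_nonneg _) (norm_nonneg _)]

end ClosedSpan

section SignedDensity

variable {X : Type*} [MeasurableSpace X] {μ : Measure X} {f : X → ℝ}

lemma ae_eq_zero_of_withDensity_ofReal_eq_neg (hf : Integrable f μ)
    (h : μ.withDensity (fun x ↦ ENNReal.ofReal (f x)) =
      μ.withDensity (fun x ↦ ENNReal.ofReal (-f x))) :
    f =ᵐ[μ] 0 := by
  rw [withDensity_eq_iff hf.aemeasurable.ennreal_ofReal hf.fun_neg.aemeasurable.ennreal_ofReal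
    hf.lintegral_lt_top.ne] at h
  filter_upwards [h] with x hx
  have hx' := congrArg ENNReal.toReal hx
  rwa [ENNReal.toReal_ofReal', ENNReal.toReal_ofReal', ← sub_eq_zero, max_zero_sub_eq_self] at hx'

lemma integral_withDensity_ofReal_sub_neg [TopologicalSpace X]
    [OpensMeasurableSpace X] (hf : Integrable f μ) (φ : X →ᵇ ℂ) :
    ∫ x, φ x ∂μ.withDensity (fun x ↦ ENNReal.ofReal (f x)) -
      ∫ x, φ x ∂μ.withDensity (fun x ↦ ENNReal.ofReal (-f x)) = ∫ x, φ x * f x ∂μ := by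
  have hφ {g : X → ℝ} (hg : Integrable g μ) :
      Integrable (fun x ↦ (ENNReal.ofReal (g x)).toReal • φ x) μ := by
    have := isFiniteMeasure_withDensity_ofReal hg.2
    exact (integrable_withDensity_iff_integrable_smul₀' hg.aemeasurable.ennreal_ofReal
      (by simp)).1 (φ.integrable _)
  rw [integral_withDensity_eq_integral_toReal_smul₀ hf.aemeasurable.ennreal_ofReal (by simp),
    integral_withDensity_eq_integral_toReal_smul₀ hf.fun_neg.aemeasurable.ennreal_ofReal (by simp),
    ← integral_sub (hφ hf) (hφ hf.fun_neg)]
  congr 1 with x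
  rw [← sub_smul, ENNReal.toReal_ofReal', ENNReal.toReal_ofReal', max_zero_sub_eq_self,
    Complex.real_smul, mul_comm]

end SignedDensity

section Characters

variable {R V W : Type*} [CommRing R] [AddCommGroup V] [Module R V] [MeasurableSpace V]
  [AddCommGroup W] [Module R W] {e : AddChar R Circle} {L : V →ₗ[R] W →ₗ[R] R} {μ : Measure V}

lemma fourierIntegral_conj (f : V → ℂ) (w : W) :
    VectorFourier.fourierIntegral e μ L (fun v ↦ conj (f v)) w =
      conj (VectorFourier.fourierIntegral e μ L f (-w)) := by
  simp only [VectorFourier.fourierIntegral, ← integral_conj]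
  simp [Circle.smul_def, AddChar.map_neg_eq_inv, ← Circle.coe_inv_eq_conj]

lemma inner_eq_fourierIntegral_of_ae_eq_char {f : Lp ℂ 2 μ} {w : W}
    (hf : f =ᵐ[μ] fun v ↦ (e (L v w) : ℂ)) (g : Lp ℂ 2 μ) :
    inner ℂ f g = VectorFourier.fourierIntegral e μ L g w := by
  rw [L2.inner_def]
  refine integral_congr_ae ?_
  filter_upwards [hf] with v hv
  simp [hv, Circle.smul_def, AddChar.map_neg_eq_inv, ← Circle.coe_inv_eq_conj, mul_comm]

lemma inner_eq_integral_char_sub_of_ae_eq_char {f g : Lp ℂ 2 μ} {s t : W}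
    (hf : f =ᵐ[μ] fun v ↦ (e (L v s) : ℂ)) (hg : g =ᵐ[μ] fun v ↦ (e (L v t) : ℂ)) :
    inner ℂ f g = ∫ v, (e (L v (t - s)) : ℂ) ∂μ := by
  rw [inner_eq_fourierIntegral_of_ae_eq_char hf, VectorFourier.fourierIntegral]
  refine integral_congr_ae ?_
  filter_upwards [hg] with v hv
  rw [hv, Circle.smul_def, smul_eq_mul, ← Circle.coe_mul, ← AddChar.map_add_eq_mul, map_sub,
    neg_add_eq_sub]

lemma norm_eq_one_of_ae_eq_char [IsProbabilityMeasure μ] {f : Lp ℂ 2 μ} {w : W}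
    (hf : f =ᵐ[μ] fun v ↦ (e (L v w) : ℂ)) : ‖f‖ = 1 := by
  have hsq : ‖f‖ ^ 2 = 1 := by
    rw [norm_sq_eq_re_inner (𝕜 := ℂ), inner_eq_integral_char_sub_of_ae_eq_char hf hf]
    simp
  exact (pow_eq_one_iff_of_nonneg (norm_nonneg f) two_ne_zero).1 hsq

end Characters

section FourierUniqueness

variable {V W : Type*} [AddCommGroup V] [Module ℝ V] [MeasurableSpace V] [PseudoEMetricSpace V]
  [BorelSpace V] [CompleteSpace V] [SecondCountableTopology V]
  [AddCommGroup W] [Module ℝ W] [TopologicalSpace W]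
  {e : AddChar ℝ Circle} {L : V →ₗ[ℝ] W →ₗ[ℝ] ℝ} {μ : Measure V}

lemma ae_eq_zero_of_fourierIntegral_ofReal_eq_zero (he : Continuous e) (he' : e ≠ 1)
    (hL' : ∀ v ≠ 0, L v ≠ 0) (hL : Continuous fun p : V × W ↦ L p.1 p.2) {f : V → ℝ}
    (hf : Integrable f μ) (h : VectorFourier.fourierIntegral e μ L (fun v ↦ (f v : ℂ)) = 0) :
    f =ᵐ[μ] 0 := by
  have := isFiniteMeasure_withDensity_ofReal hf.2
  have := isFiniteMeasure_withDensity_ofReal hf.fun_neg.2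
  refine ae_eq_zero_of_withDensity_ofReal_eq_neg hf
    (ext_of_integral_char_eq he he' hL' hL fun w ↦ sub_eq_zero.1 ?_)
  rw [integral_withDensity_ofReal_sub_neg hf]
  simpa [VectorFourier.fourierIntegral, Circle.smul_def] using congrFun h (-w)

lemma re_ae_eq_zero_of_fourierIntegral_eq_zero (he : Continuous e) (he' : e ≠ 1)
    (hL' : ∀ v ≠ 0, L v ≠ 0) (hL : Continuous fun p : V × W ↦ L p.1 p.2) {f : V → ℂ}
    (hf : Integrable f μ) (h : VectorFourier.fourierIntegral e μ L f = 0) :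
    (fun v ↦ (f v).re) =ᵐ[μ] 0 := by
  have hconj : VectorFourier.fourierIntegral e μ L (fun v ↦ conj (f v)) = 0 := by
    ext w
    simp [fourierIntegral_conj, h]
  have hre : (fun v ↦ ((f v).re : ℂ)) = (1 / 2 : ℂ) • (f + fun v ↦ conj (f v)) := by
    ext v
    rw [Complex.re_eq_add_conj, Pi.smul_apply, Pi.add_apply, smul_eq_mul, one_div_mul_eq_div]
  have hfre : Integrable (fun v ↦ (f v).re) μ := hf.re
  have hfc : Integrable (fun v ↦ conj (f v)) μ :=
    (LinearIsometryEquiv.integrable_comp_iff Complex.conjLIE).2 hf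
  refine ae_eq_zero_of_fourierIntegral_ofReal_eq_zero he he' hL' hL hfre ?_
  rw [hre, VectorFourier.fourierIntegral_const_smul, VectorFourier.fourierIntegral_add he hL hf hfc,
    h, hconj, add_zero, smul_zero]

lemma ae_eq_zero_of_fourierIntegral_eq_zero (he : Continuous e) (he' : e ≠ 1)
    (hL' : ∀ v ≠ 0, L v ≠ 0) (hL : Continuous fun p : V × W ↦ L p.1 p.2) {f : V → ℂ}
    (hf : Integrable f μ) (h : VectorFourier.fourierIntegral e μ L f = 0) :
    f =ᵐ[μ] 0 := by
  have hI : VectorFourier.fourierIntegral e μ L (Complex.I • f) = 0 := by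
    rw [VectorFourier.fourierIntegral_const_smul, h, smul_zero]
  filter_upwards [re_ae_eq_zero_of_fourierIntegral_eq_zero he he' hL' hL hf h,
    re_ae_eq_zero_of_fourierIntegral_eq_zero he he' hL' hL (hf.smul Complex.I) hI] with v hre him
  exact Complex.ext hre (by simpa using him)

lemma topologicalClosure_span_range_eq_top_of_ae_eq_char [IsFiniteMeasure μ] (he : Continuous e)
    (he' : e ≠ 1) (hL' : ∀ v ≠ 0, L v ≠ 0) (hL : Continuous fun p : V × W ↦ L p.1 p.2)
    {E : W → Lp ℂ 2 μ} (hE : ∀ w, E w =ᵐ[μ] fun v ↦ (e (L v w) : ℂ)) :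
    (Submodule.span ℂ (Set.range E)).topologicalClosure = ⊤ := by
  rw [Submodule.topologicalClosure_eq_top_iff, Submodule.eq_bot_iff]
  intro f hf
  have hfi : Integrable f μ := (Lp.memLp f).integrable (by norm_num)
  rw [Lp.eq_zero_iff_ae_eq_zero]
  refine ae_eq_zero_of_fourierIntegral_eq_zero he he' hL' hL hfi (funext fun w ↦ ?_)
  rw [← inner_eq_fourierIntegral_of_ae_eq_char (hE w)]
  exact hf _ (Submodule.subset_span (Set.mem_range_self w))

theorem onb_iff_parseval_sum_eq_one_general [IsProbabilityMeasure μ] (he : Continuous e)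
    (he' : e ≠ 1) (hL' : ∀ v ≠ 0, L v ≠ 0) (hL : Continuous fun p : V × W ↦ L p.1 p.2)
    (Γ : Set W) {E : W → Lp ℂ 2 μ} (hE : ∀ w, E w =ᵐ[μ] fun v ↦ (e (L v w) : ℂ))
    (hortho : Orthonormal ℂ (fun γ : Γ ↦ E γ)) :
    (Submodule.span ℂ (Set.range fun γ : Γ ↦ E γ)).topologicalClosure = ⊤ ↔
      ∀ t : W, ∑' γ : Γ, ‖∫ v, (e (L v (t - γ)) : ℂ) ∂μ‖ ^ 2 = 1 := by
  calc
    _ ↔ ∀ t, E t ∈ (Submodule.span ℂ (Set.range fun γ : Γ ↦ E γ)).topologicalClosure := by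
      refine ⟨fun h t ↦ h ▸ Submodule.mem_top, fun h ↦ top_le_iff.1 ?_⟩
      rw [← topologicalClosure_span_range_eq_top_of_ae_eq_char he he' hL' hL hE]
      exact Submodule.topologicalClosure_minimal _
        (Submodule.span_le.2 (Set.range_subset_iff.2 h)) (Submodule.isClosed_topologicalClosure _)
    _ ↔ _ := forall_congr' fun t ↦ by
      simp only [mem_topologicalClosure_span_iff_tsum_norm_inner_sq hortho,
        inner_eq_integral_char_sub_of_ae_eq_char (hE _) (hE t),
        norm_eq_one_of_ae_eq_char (hE t), one_pow]

end FourierUniqueness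

lemma fourierChar_mul_eq_exp (x t : ℝ) :
    (𝐞 (x * t) : ℂ) = Complex.exp (2 * Real.pi * Complex.I * x * t) := by
  rw [Real.fourierChar_apply]
  push_cast
  ring_nf

/-- Let `ν` be a Borel probability measure on `ℝ` with compact support, and let
`Γ ⊆ ℝ` be such that the exponentials `{e_γ : γ ∈ Γ}` form an orthonormal family in
`L²(ν)`.  Then `{e_γ : γ ∈ Γ}` is an orthonormal basis of `L²(ν)` (i.e. the family is
total) if and only if `Σ_{γ ∈ Γ} |ν̂(t − γ)|² = 1` for every `t ∈ ℝ`, where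
`ν̂(s) = ∫ e^{2πixs} dν(x)`. -/
theorem onb_iff_parseval_sum_eq_one
    (ν : Measure ℝ) [IsProbabilityMeasure ν]
    (hsupp : ∃ K : Set ℝ, IsCompact K ∧ ν Kᶜ = 0)
    (Γ : Set ℝ)
    (E : ℝ → Lp ℂ 2 ν)
    (hE : ∀ γ : ℝ, (E γ : ℝ → ℂ) =ᵐ[ν] fun x : ℝ => Complex.exp (2 * Real.pi * Complex.I * γ * x))
    (hortho : Orthonormal ℂ (fun γ : Γ => E (γ : ℝ))) :
    (Submodule.span ℂ (Set.range (fun γ : Γ => E (γ : ℝ)))).topologicalClosure = ⊤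
      ↔ ∀ t : ℝ,
        ∑' γ : Γ, ‖∫ x : ℝ, Complex.exp (2 * Real.pi * Complex.I * x * (t - (γ : ℝ))) ∂ν‖ ^ 2
          = 1 := by
  simpa [fourierChar_mul_eq_exp] using onb_iff_parseval_sum_eq_one_general
    Real.continuous_fourierChar Real.fourierChar_ne_one (L := LinearMap.mul ℝ ℝ)
    (fun v hv h ↦ hv (by simpa using DFunLike.congr_fun h 1)) continuous_mul Γ
    (fun γ ↦ by simpa [fourierChar_mul_eq_exp, mul_right_comm] using hE γ) hortho
end
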